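/- Assume that X is uniformly perfect at a for radii ≥ 1 with constant κ, that μ is doubling, and that for some q > 0 the measure μ̂_q is doubling on (X̂, d̂). Then there exist δ ∈ (0,q) and a constant C > 0 such that μ̂_q(B̂(∞,ρ')) ≤ C (ρ'/ρ)^δ μ̂_q(B̂(∞,ρ)) whenever 0 < ρ' ≤ ρ ≤ 1/(1+4κ). -/

import Mathlib

open Metric Set MeasureTheory Filter
open scoped ENNReal NNReal

noncomputable section

variable {X : Type*}

/-- The quasimetric `d_a` on the sphericalization `X̂ = X ∪ {∞}`, with `none` playing
the role of the point `∞`. -/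
noncomputable def sphDist [MetricSpace X] (a : X) : Option X → Option X → ℝ
  | some x, some y => dist x y / ((1 + dist x a) * (1 + dist y a))
  | some x, none => 1 / (1 + dist x a)
  | none, some y => 1 / (1 + dist y a)
  | none, none => 0

/-- The sum `Σ_{j=1}^k d_a(x_{j-1}, x_j)` along a finite sequence (list) in `X̂`. -/
noncomputable def chainSum [MetricSpace X] (a : X) : List (Option X) → ℝ
  | [] => 0
  | [_] => 0
  | x :: y :: l => sphDist a x y + chainSum a (y :: l)

/-- The sphericalized distance `d̂(x,y) = inf Σ_{j=1}^k d_a(x_{j-1},x_j)`, the infimum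
being taken over all finite sequences `x = x_0, x_1, …, x_k = y` in `X̂`. -/
noncomputable def sphHatDist [MetricSpace X] (a : X) (x y : Option X) : ℝ :=
  sInf {s : ℝ | ∃ L : List (Option X),
    L.head? = some x ∧ L.getLast? = some y ∧ chainSum a L = s}

/-- `d̂(x) = d̂(x,∞) = 1/(1+|x|)` for `x ∈ X`. -/
noncomputable def sphD [MetricSpace X] (a x : X) : ℝ := 1 / (1 + dist x a)

/-- `d̂(x) = d̂(x,∞)` on all of `X̂`, with the convention `d̂(∞) = 0`. -/
noncomputable def sphDhat [MetricSpace X] (a : X) : Option X → ℝ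
  | none => 0
  | some x => sphD a x

/-- The sphericalized measure `μ̂_q` on `X̂`: `dμ̂_q(x) = (1+|x|)^{-q} dμ(x)` on `X`,
and `μ̂_q({∞}) = 0`.  Here `sphMeas a q μ S` is the value `μ̂_q(S)` for `S ⊆ X̂`. -/
noncomputable def sphMeas [MetricSpace X] [MeasurableSpace X] (a : X) (q : ℝ)
    (μ : Measure X) (S : Set (Option X)) : ℝ≥0∞ :=
  ∫⁻ x in (Option.some ⁻¹' S), ENNReal.ofReal (((1 + dist x a) ^ q)⁻¹) ∂μ

/-!
Uniform perfectness at `a` for large radii becomes, after the inversion `|x| ↦ 1 / (1 + |x|)`,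
uniform perfectness of `X̂` at `∞` for small radii. The theorem is then an instance of reverse
doubling: an annulus around `∞` contains a ball whose radius is comparable to that of the annulus,
so by doubling the ball carries a fixed proportion of the mass around `∞`, and removing the annulus
shrinks the mass by a fixed factor `θ < 1`. Iterating over geometric scales turns this factor into
a power of `ρ' / ρ`; a smaller exponent is also admissible, whence `δ < q`.
-/

section GeometricDecay

open scoped Topology

lemma exists_mem_Ioo_le_rpow {ε θ η : ℝ} (hε : 0 < ε) (hθ : θ < 1) (hη : 0 < η) :
    ∃ δ ∈ Ioo 0 η, θ ≤ ε ^ δ := by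
  have hcont : Tendsto (fun δ : ℝ => ε ^ δ) (𝓝[>] 0) (𝓝 1) := by
    simpa using (Real.continuousAt_const_rpow (b := 0) hε.ne').tendsto.mono_left nhdsWithin_le_nhds
  have hsmall : ∀ᶠ δ in 𝓝[>] 0, δ ∈ Ioo 0 η := Ioo_mem_nhdsGT hη
  exact (hsmall.and (hcont.eventually_const_le hθ)).exists

variable {M : ℝ → ℝ≥0∞} {ε δ R : ℝ}

lemma apply_pow_mul_le_of_apply_mul_le (hε : 0 < ε) (hε1 : ε ≤ 1)
    (hstep : ∀ ρ ∈ Ioc 0 R, M (ε * ρ) ≤ ENNReal.ofReal (ε ^ δ) * M ρ) (k : ℕ) {ρ : ℝ}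
    (hρ : ρ ∈ Ioc 0 R) :
    M (ε ^ k * ρ) ≤ ENNReal.ofReal ((ε ^ k) ^ δ) * M ρ := by
  induction k with
  | zero => simp
  | succ k ih =>
    have hmem : ε ^ k * ρ ∈ Ioc 0 R :=
      ⟨mul_pos (pow_pos hε k) hρ.1,
        (mul_le_of_le_one_left hρ.1.le (pow_le_one₀ hε.le hε1)).trans hρ.2⟩
    calc M (ε ^ (k + 1) * ρ) = M (ε * (ε ^ k * ρ)) := by rw [pow_succ', mul_assoc]
      _ ≤ ENNReal.ofReal (ε ^ δ) * (ENNReal.ofReal ((ε ^ k) ^ δ) * M ρ) := by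
        grw [hstep _ hmem, ih]
      _ = ENNReal.ofReal ((ε ^ (k + 1)) ^ δ) * M ρ := by
        rw [← mul_assoc, ← ENNReal.ofReal_mul (by positivity),
          ← Real.mul_rpow hε.le (by positivity), pow_succ']

lemma le_rpow_mul_of_apply_mul_le (hM : Monotone M) (hε : 0 < ε) (hε1 : ε < 1)
    (hδ : 0 ≤ δ) (hstep : ∀ ρ ∈ Ioc 0 R, M (ε * ρ) ≤ ENNReal.ofReal (ε ^ δ) * M ρ)
    {ρ' ρ : ℝ} (hρ' : 0 < ρ') (hle : ρ' ≤ ρ) (hρR : ρ ≤ R) :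
    M ρ' ≤ ENNReal.ofReal ((ε⁻¹ * (ρ' / ρ)) ^ δ) * M ρ := by
  have hρ : 0 < ρ := hρ'.trans_le hle
  obtain ⟨k, hlower, hupper⟩ :=
    exists_nat_pow_near_of_lt_one (div_pos hρ' hρ) ((div_le_one hρ).2 hle) hε hε1
  have hpow : ε ^ k ≤ ε⁻¹ * (ρ' / ρ) := by
    rw [le_inv_mul_iff₀ hε, ← pow_succ']
    exact hlower.le
  calc M ρ' ≤ M (ε ^ k * ρ) := hM ((div_le_iff₀ hρ).1 hupper)
    _ ≤ ENNReal.ofReal ((ε ^ k) ^ δ) * M ρ :=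
      apply_pow_mul_le_of_apply_mul_le hε hε1.le hstep k ⟨hρ, hρR⟩
    _ ≤ ENNReal.ofReal ((ε⁻¹ * (ρ' / ρ)) ^ δ) * M ρ := by gcongr

end GeometricDecay

section ReverseDoubling

variable {Y : Type*} [PseudoMetricSpace Y] {p : Y} {κ : ℝ} {I : Set ℝ}

/-- Uniform perfectness of a space at the point `p`, with constant `κ`, for the radii in `I`. -/
def IsUniformlyPerfectAt (p : Y) (κ : ℝ) (I : Set ℝ) : Prop :=
  ∀ r ∈ I, (ball p (κ * r) \ ball p r).Nonempty

lemma IsUniformlyPerfectAt.one_lt (hp : IsUniformlyPerfectAt p κ I) {r : ℝ} (hr : r ∈ I)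
    (hr0 : 0 < r) : 1 < κ := by
  obtain ⟨x, hxκ, hx⟩ := hp r hr
  have : 1 * r < κ * r := by simpa using (not_lt.1 hx).trans_lt hxκ
  exact lt_of_mul_lt_mul_right this hr0.le

variable [MeasurableSpace Y] {ν : Measure Y} {C : ℝ≥0}

/-- The measure `ν` is doubling with constant `C`. Unlike in Mathlib's
`IsUnifLocDoublingMeasure`, the bound concerns open balls and holds at every scale. -/
def IsDoublingWith (C : ℝ≥0) (ν : Measure Y) : Prop :=
  ∀ (x : Y) (r : ℝ), 0 < r → ν (ball x (2 * r)) ≤ C * ν (ball x r)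

lemma IsDoublingWith.measure_ball_two_pow_mul_le (hν : IsDoublingWith C ν) (x : Y) {r : ℝ}
    (hr : 0 < r) (n : ℕ) : ν (ball x (2 ^ n * r)) ≤ C ^ n * ν (ball x r) := by
  induction n with
  | zero => simp
  | succ n ih =>
    calc ν (ball x (2 ^ (n + 1) * r)) = ν (ball x (2 * (2 ^ n * r))) := by
          rw [pow_succ', mul_assoc]
      _ ≤ C * (C ^ n * ν (ball x r)) := by grw [hν x _ (by positivity), ih]
      _ = C ^ (n + 1) * ν (ball x r) := by rw [← mul_assoc, pow_succ']

variable [OpensMeasurableSpace Y]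

lemma IsDoublingWith.measure_ball_half_le (hν : IsDoublingWith C ν) {r : ℝ} (hr : 0 < r)
    (hannulus : (ball p (κ * r) \ ball p r).Nonempty) {n : ℕ} (hn : 6 * κ ≤ 2 ^ n) :
    (C ^ n + 1) * ν (ball p (r / 2)) ≤ C ^ n * ν (ball p (2 * κ * r)) := by
  obtain ⟨y, hyκ, hyr⟩ := hannulus
  rw [mem_ball] at hyκ
  rw [mem_ball, not_lt] at hyr
  have hdisj : Disjoint (ball y (r / 2)) (ball p (r / 2)) := ball_disjoint_ball (by linarith)
  have hsub : ball y (r / 2) ∪ ball p (r / 2) ⊆ ball p (2 * κ * r) :=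
    union_subset (ball_subset_ball' (by linarith)) (ball_subset_ball (by linarith))
  have hcover : ball p (2 * κ * r) ⊆ ball y (2 ^ n * (r / 2)) :=
    ball_subset_ball' (by rw [dist_comm]; nlinarith)
  have hmass : ν (ball p (r / 2)) ≤ C ^ n * ν (ball y (r / 2)) :=
    calc ν (ball p (r / 2)) ≤ ν (ball y (2 ^ n * (r / 2))) :=
          measure_mono (subset_union_right.trans (hsub.trans hcover))
      _ ≤ C ^ n * ν (ball y (r / 2)) := hν.measure_ball_two_pow_mul_le y (half_pos hr) n
  calc (C ^ n + 1) * ν (ball p (r / 2))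
      = ν (ball p (r / 2)) + C ^ n * ν (ball p (r / 2)) := by ring
    _ ≤ C ^ n * ν (ball y (r / 2)) + C ^ n * ν (ball p (r / 2)) := by gcongr
    _ = C ^ n * ν (ball y (r / 2) ∪ ball p (r / 2)) := by
      rw [measure_union hdisj measurableSet_ball, mul_add]
    _ ≤ C ^ n * ν (ball p (2 * κ * r)) := by gcongr

theorem IsDoublingWith.exists_measure_ball_half_le (hν : IsDoublingWith C ν)
    (hp : IsUniformlyPerfectAt p κ I) (hI : I ⊆ Ioi 0) :
    ∃ θ : ℝ≥0, θ < 1 ∧ ∀ r ∈ I, ν (ball p (r / 2)) ≤ θ * ν (ball p (2 * κ * r)) := by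
  obtain ⟨n, hn⟩ := pow_unbounded_of_one_lt (6 * κ) one_lt_two
  refine ⟨C ^ n / (C ^ n + 1), (div_lt_one (by positivity)).2 (lt_add_one _), fun r hr => ?_⟩
  have hle := hν.measure_ball_half_le (hI hr) (hp r hr) hn.le
  rw [ENNReal.mul_le_iff_le_inv (by simp) (by finiteness), ← mul_assoc] at hle
  simpa [div_eq_inv_mul, ENNReal.coe_inv] using hle

theorem IsDoublingWith.exists_measure_ball_le_rpow_mul (hν : IsDoublingWith C ν) {R : ℝ}
    (hR : 0 < R) (hp : IsUniformlyPerfectAt p κ (Ioc 0 R)) {η : ℝ} (hη : 0 < η) :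
    ∃ δ C' : ℝ, 0 < δ ∧ δ < η ∧ 0 < C' ∧ ∀ ρ' ρ : ℝ, 0 < ρ' → ρ' ≤ ρ → ρ ≤ 2 * κ * R →
      ν (ball p ρ') ≤ ENNReal.ofReal (C' * (ρ' / ρ) ^ δ) * ν (ball p ρ) := by
  have hκ : 1 < κ := hp.one_lt ⟨hR, le_rfl⟩ hR
  obtain ⟨θ, hθ, hdecay⟩ := hν.exists_measure_ball_half_le hp fun _ hr => hr.1
  have hε : 0 < (4 * κ)⁻¹ := by positivity
  have hε1 : (4 * κ)⁻¹ < 1 := inv_lt_one_of_one_lt₀ (by linarith)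
  obtain ⟨δ, ⟨hδ, hδη⟩, hθδ⟩ := exists_mem_Ioo_le_rpow hε (NNReal.coe_lt_one.2 hθ) hη
  have hstep : ∀ ρ ∈ Ioc 0 (2 * κ * R), ν (ball p ((4 * κ)⁻¹ * ρ)) ≤
      ENNReal.ofReal ((4 * κ)⁻¹ ^ δ) * ν (ball p ρ) := fun ρ hρ => by
    have hmem : ρ / (2 * κ) ∈ Ioc 0 R :=
      ⟨div_pos hρ.1 (by positivity), (div_le_iff₀' (by positivity)).2 hρ.2⟩
    calc ν (ball p ((4 * κ)⁻¹ * ρ)) = ν (ball p (ρ / (2 * κ) / 2)) := by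
          congr 2; ring
      _ ≤ θ * ν (ball p (2 * κ * (ρ / (2 * κ)))) := hdecay _ hmem
      _ ≤ ENNReal.ofReal ((4 * κ)⁻¹ ^ δ) * ν (ball p ρ) := by
        rw [mul_div_cancel₀ ρ (by positivity), ← ENNReal.ofReal_coe_nnreal]
        gcongr
  refine ⟨δ, ((4 * κ)⁻¹⁻¹) ^ δ, hδ, hδη, by positivity, fun ρ' ρ hρ' hle hρ => ?_⟩
  rw [← Real.mul_rpow (by positivity) (div_nonneg hρ'.le (hρ'.le.trans hle))]
  exact le_rpow_mul_of_apply_mul_le (M := fun ρ => ν (ball p ρ))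
    (fun _ _ h => measure_mono (ball_subset_ball h)) hε hε1 hδ.le hstep hρ' hle hρ

end ReverseDoubling

section Sphericalization

variable [MetricSpace X] {a : X}

lemma sphDist_nonneg (x y : Option X) : 0 ≤ sphDist a x y := by
  cases x <;> cases y <;> simp only [sphDist] <;> positivity

lemma sphDist_self (x : Option X) : sphDist a x x = 0 := by
  cases x <;> simp [sphDist]

lemma sphDist_comm (x y : Option X) : sphDist a x y = sphDist a y x := by
  cases x <;> cases y <;> simp [sphDist, dist_comm, mul_comm]

lemma sphDist_some_some_le_dist (x y : X) : sphDist a (some x) (some y) ≤ dist x y :=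
  div_le_self dist_nonneg (one_le_mul_of_one_le_of_one_le (by simp) (by simp))

lemma sphDist_none_le_add (x y : Option X) :
    sphDist a none y ≤ sphDist a none x + sphDist a x y := by
  match x, y with
  | none, y => simp [sphDist]
  | some x, none => exact add_nonneg (sphDist_nonneg _ _) (sphDist_nonneg _ _)
  | some x, some y =>
    have hx : 0 < 1 + dist x a := by positivity
    have hy : 0 < 1 + dist y a := by positivity
    simp only [sphDist]
    rw [div_add_div _ _ hx.ne' (by positivity), div_le_div_iff₀ hy (by positivity)]
    nlinarith [dist_triangle x y a, mul_pos (mul_pos hx hx) hy]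

lemma chainSum_nonneg : ∀ L : List (Option X), 0 ≤ chainSum a L
  | [] => le_rfl
  | [_] => le_rfl
  | x :: y :: l => add_nonneg (sphDist_nonneg x y) (chainSum_nonneg (y :: l))

lemma chainSum_append {y z : Option X} {L₂ : List (Option X)} (hz : L₂.head? = some z) :
    ∀ {L₁ : List (Option X)}, L₁.getLast? = some y →
      chainSum a (L₁ ++ L₂) = chainSum a L₁ + sphDist a y z + chainSum a L₂
  | [], hy => by simp at hy
  | [x], hy => by
    obtain ⟨l, rfl⟩ := List.head?_eq_some_iff.1 hz
    obtain rfl : x = y := by simpa using hy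
    simp [chainSum]
  | x :: w :: l, hy => by
    have ih := chainSum_append hz (L₁ := w :: l) (by rwa [List.getLast?_cons_cons] at hy)
    simp only [List.cons_append, chainSum] at ih ⊢
    rw [ih]
    ring

lemma chainSum_reverse : ∀ L : List (Option X), chainSum a L.reverse = chainSum a L
  | [] => rfl
  | [_] => rfl
  | x :: y :: l => by
    have hlast : (y :: l).reverse.getLast? = some y := by simp
    rw [List.reverse_cons, chainSum_append (z := x) rfl hlast, chainSum_reverse (y :: l),
      sphDist_comm]
    simp only [chainSum]
    ring

lemma sphDist_none_le_add_chainSum {y : Option X} :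
    ∀ {L : List (Option X)} {x : Option X}, L.head? = some x → L.getLast? = some y →
      sphDist a none y ≤ sphDist a none x + chainSum a L
  | [], _, hx, _ => by simp at hx
  | [z], x, hx, hy => by
    obtain rfl : z = x := by simpa using hx
    obtain rfl : z = y := by simpa using hy
    simp [chainSum]
  | z :: w :: l, x, hx, hy => by
    obtain rfl : z = x := by simpa using hx
    have ih := sphDist_none_le_add_chainSum (L := w :: l) (x := w) rfl
      (by rwa [List.getLast?_cons_cons] at hy)
    rw [chainSum]
    linarith [sphDist_none_le_add (a := a) z w]

lemma sphHatDist_le_chainSum {x y : Option X} {L : List (Option X)} (hx : L.head? = some x)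
    (hy : L.getLast? = some y) : sphHatDist a x y ≤ chainSum a L :=
  csInf_le ⟨0, by rintro _ ⟨L, -, -, rfl⟩; exact chainSum_nonneg L⟩ ⟨L, hx, hy, rfl⟩

lemma le_sphHatDist {x y : Option X} {c : ℝ}
    (h : ∀ L : List (Option X), L.head? = some x → L.getLast? = some y → c ≤ chainSum a L) :
    c ≤ sphHatDist a x y :=
  le_csInf ⟨_, [x, y], rfl, rfl, rfl⟩ (by rintro _ ⟨L, hx, hy, rfl⟩; exact h L hx hy)

lemma sphHatDist_le_sphDist (x y : Option X) : sphHatDist a x y ≤ sphDist a x y := by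
  simpa [chainSum] using sphHatDist_le_chainSum (a := a) (L := [x, y]) rfl rfl

lemma sphHatDist_self (x : Option X) : sphHatDist a x x = 0 :=
  ((sphHatDist_le_sphDist x x).trans_eq (sphDist_self x)).antisymm
    (le_sphHatDist fun L _ _ => chainSum_nonneg L)

lemma sphHatDist_comm (x y : Option X) : sphHatDist a x y = sphHatDist a y x := by
  have hle (x y : Option X) : sphHatDist a x y ≤ sphHatDist a y x := le_sphHatDist fun L hy hx => by
    rw [← chainSum_reverse]
    exact sphHatDist_le_chainSum (by rwa [List.head?_reverse]) (by rwa [List.getLast?_reverse])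
  exact (hle x y).antisymm (hle y x)

lemma sphHatDist_triangle (x y z : Option X) :
    sphHatDist a x z ≤ sphHatDist a x y + sphHatDist a y z := by
  rw [← sub_le_iff_le_add]
  refine le_sphHatDist fun L₁ hx hy₁ => ?_
  rw [sub_le_comm]
  refine le_sphHatDist fun L₂ hy₂ hz => ?_
  have hjoin : sphHatDist a x z ≤ chainSum a (L₁ ++ L₂) :=
    sphHatDist_le_chainSum (by simp [hx]) (by simp [hz])
  rw [chainSum_append hy₂ hy₁, sphDist_self] at hjoin
  linarith

lemma sphHatDist_none (y : Option X) : sphHatDist a none y = sphDist a none y :=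
  (sphHatDist_le_sphDist none y).antisymm <| le_sphHatDist fun L hx hy => by
    simpa [sphDist_self] using sphDist_none_le_add_chainSum (a := a) hx hy

/-- The sphericalization `X̂ = X ∪ {∞}` of `X` based at `a`, a type synonym of `Option X` that
carries the distance `d̂` and its Borel σ-algebra. -/
def Sphericalization (_a : X) : Type _ := Option X

namespace Sphericalization

instance : PseudoMetricSpace (Sphericalization a) where
  dist := sphHatDist a
  dist_self := sphHatDist_self
  dist_comm := sphHatDist_comm
  dist_triangle := sphHatDist_triangle

instance : MeasurableSpace (Sphericalization a) := borel _

instance : BorelSpace (Sphericalization a) := ⟨rfl⟩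

/-- The inclusion of `X` into its sphericalization. -/
def of (a x : X) : Sphericalization a := some x

/-- The point `∞` of the sphericalization. -/
def infty (a : X) : Sphericalization a := none

lemma ball_eq (x : Sphericalization a) (r : ℝ) :
    ball x r = {y : Option X | sphHatDist a x y < r} :=
  Set.ext fun _ => mem_ball'

lemma dist_of_infty (x : X) : dist (of a x) (infty a) = 1 / (1 + dist x a) :=
  (sphHatDist_comm _ _).trans (sphHatDist_none (some x))

lemma lipschitzWith_of : LipschitzWith 1 (of a) :=
  LipschitzWith.mk_one fun x y =>
    (sphHatDist_le_sphDist _ _).trans (sphDist_some_some_le_dist x y)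

lemma isUniformlyPerfectAt_infty {κ : ℝ} (ha : IsUniformlyPerfectAt a κ (Ici 1)) :
    IsUniformlyPerfectAt (infty a) (1 + κ) (Ioc 0 (1 + κ)⁻¹) := by
  rintro r ⟨hr, hrκ⟩
  have hκ : 1 < κ := ha.one_lt self_mem_Ici one_pos
  -- Inversion sends the annulus of radii `s` and `κ * s` into that of radii `r` and `(1 + κ) * r`.
  set s := ((1 + κ) * r)⁻¹ with hs
  have hs1 : 1 ≤ s :=
    (one_le_inv₀ (by positivity)).2 (by rwa [← le_div_iff₀' (by positivity), one_div])
  obtain ⟨x, hxκ, hxs⟩ := ha s hs1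
  rw [mem_ball] at hxκ
  rw [mem_ball, not_lt] at hxs
  refine ⟨of a x, ?_, ?_⟩
  · rw [mem_ball, dist_of_infty, one_div]
    exact inv_lt_of_inv_lt₀ (by positivity) (by linarith)
  · have hrs : r⁻¹ = (1 + κ) * s := by rw [hs]; field_simp
    rw [mem_ball, not_lt, dist_of_infty, one_div]
    exact (le_inv_comm₀ hr (by positivity)).2 (by linarith)

variable [MeasurableSpace X]

/-- The measure `μ̂_q` on the sphericalization, with `dμ̂_q(x) = (1 + |x|)^{-q} dμ(x)` on `X` and
no mass at `∞`. -/
def measure (a : X) (q : ℝ) (μ : Measure X) : Measure (Sphericalization a) :=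
  (μ.withDensity fun x => ENNReal.ofReal ((1 + dist x a) ^ q)⁻¹).map (of a)

variable [OpensMeasurableSpace X]

lemma measure_ball (q : ℝ) (μ : Measure X) (x : Sphericalization a) (r : ℝ) :
    measure a q μ (ball x r) = sphMeas a q μ {y : Option X | sphHatDist a x y < r} := by
  have hof : Measurable (of a) := lipschitzWith_of.continuous.measurable
  rw [measure, Measure.map_apply hof measurableSet_ball,
    withDensity_apply _ (hof measurableSet_ball), ball_eq]
  rfl

end Sphericalization

end Sphericalization

open Sphericalization in
theorem statement17_general [MetricSpace X] [MeasurableSpace X] [OpensMeasurableSpace X] {a : X}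
    {μ : Measure X} {κ : ℝ} (hup : IsUniformlyPerfectAt a κ (Ici 1)) {q C : ℝ}
    (hdoub : ∀ (x : Option X) (r : ℝ), 0 < r →
      sphMeas a q μ {y : Option X | sphHatDist a x y < 2 * r} ≤
        ENNReal.ofReal C * sphMeas a q μ {y : Option X | sphHatDist a x y < r})
    {η : ℝ} (hη : 0 < η) :
    ∃ δ C' : ℝ, 0 < δ ∧ δ < η ∧ 0 < C' ∧ ∀ ρ' ρ : ℝ, 0 < ρ' → ρ' ≤ ρ → ρ ≤ 1 →
      sphMeas a q μ {y : Option X | sphHatDist a none y < ρ'} ≤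
        ENNReal.ofReal (C' * (ρ' / ρ) ^ δ) *
          sphMeas a q μ {y : Option X | sphHatDist a none y < ρ} := by
  have hκ : 1 < κ := hup.one_lt self_mem_Ici one_pos
  have hdoubling : IsDoublingWith C.toNNReal (measure a q μ) := fun x r hr => by
    simpa only [measure_ball, ENNReal.ofReal] using hdoub x r hr
  obtain ⟨δ, C', hδ, hδη, hC', hdecay⟩ := hdoubling.exists_measure_ball_le_rpow_mul
    (by positivity) (isUniformlyPerfectAt_infty hup) hη
  refine ⟨δ, C', hδ, hδη, hC', fun ρ' ρ hρ' hle hρ => ?_⟩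
  have hscale : ρ ≤ 2 * (1 + κ) * (1 + κ)⁻¹ := by
    rw [mul_inv_cancel_right₀ (by positivity)]
    linarith
  have hballs := hdecay ρ' ρ hρ' hle hscale
  rw [measure_ball, measure_ball] at hballs
  exact hballs

/-- If `X` is uniformly perfect at `a` for radii `≥ 1` with
constant `κ`, `μ` is doubling, and for some `q > 0` the measure `μ̂_q` is doubling on
`(X̂, d̂)`, then there exist `δ ∈ (0,q)` and `C > 0` such that
`μ̂_q(B̂(∞,ρ')) ≤ C (ρ'/ρ)^δ μ̂_q(B̂(∞,ρ))` whenever `0 < ρ' ≤ ρ ≤ 1/(1+4κ)`. -/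
theorem statement17 [MetricSpace X] [MeasurableSpace X] [BorelSpace X]
    (hX : ¬ Bornology.IsBounded (Set.univ : Set X)) (a : X) (μ : Measure X)
    (hpos : ∀ (x : X) (r : ℝ), 0 < r → 0 < μ (Metric.ball x r))
    (hfin : ∀ (x : X) (r : ℝ), 0 < r → μ (Metric.ball x r) < ⊤)
    (κ : ℝ) (hκ : 1 < κ)
    (hup : ∀ r : ℝ, 1 ≤ r → (Metric.ball a (κ * r) \ Metric.ball a r).Nonempty)
    (Cμ : ℝ) (hCμ : 1 < Cμ)
    (hdoub : ∀ (x : X) (r : ℝ), 0 < r →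
      μ (Metric.ball x (2 * r)) ≤ ENNReal.ofReal Cμ * μ (Metric.ball x r))
    (q : ℝ) (hq : 0 < q)
    (Chat : ℝ) (hChat : 1 < Chat)
    (hdoubhat : ∀ (x : Option X) (r : ℝ), 0 < r →
      sphMeas a q μ {y : Option X | sphHatDist a x y < 2 * r} ≤
        ENNReal.ofReal Chat * sphMeas a q μ {y : Option X | sphHatDist a x y < r}) :
    ∃ δ C : ℝ, 0 < δ ∧ δ < q ∧ 0 < C ∧
      ∀ ρ' ρ : ℝ, 0 < ρ' → ρ' ≤ ρ → ρ ≤ 1 / (1 + 4 * κ) →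
        sphMeas a q μ {y : Option X | sphHatDist a none y < ρ'} ≤
          ENNReal.ofReal (C * (ρ' / ρ) ^ δ) *
            sphMeas a q μ {y : Option X | sphHatDist a none y < ρ} := by
  obtain ⟨δ, C, hδ, hδq, hC, hdecay⟩ := statement17_general hup hdoubhat hq
  exact ⟨δ, C, hδ, hδq, hC, fun ρ' ρ hρ' hle hρ => hdecay ρ' ρ hρ' hle <|
    hρ.trans (div_le_self zero_le_one (by linarith))⟩
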